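/- Fix a semi-infinite initial burger stack S₀ containing infinitely many c's and infinitely many h's, and fix N > 0. If two sequences x = (x(1),…,x(N)) and x' = (x'(1),…,x'(N)) in Θ^N agree in all coordinates except exactly one, then the resulting discrepancy values satisfy |𝒟_N(x) − 𝒟_N(x')| ≤ 2. -/

import Mathlib

open MeasureTheory ProbabilityTheory Filter Topology
open scoped ENNReal NNReal

/-- The five-symbol alphabet Θ: cheeseburger, hamburger, cheeseburger order,
hamburger order, flexible order. -/
inductive Burger where
  | c | h | C | H | F
deriving DecidableEq

instance : MeasurableSpace Burger := ⊤

namespace Burger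

/-- `true` iff the symbol is a burger (`c` or `h`). -/
def isBurgerSym : Burger → Bool
  | c => true
  | h => true
  | _ => false

/-- `true` iff the symbol is an order (`C`, `H` or `F`). -/
def isOrderSym (s : Burger) : Bool := !s.isBurgerSym

/-- One reduction step acting on a state `(O, B)` where `O` is the list of unfulfilled
orders (most recent first) and `B` is the burger stack (top first). -/
def stepRev (s : List Burger × List Burger) (x : Burger) : List Burger × List Burger :=
  match x with
  | .c => (s.1, .c :: s.2)
  | .h => (s.1, .h :: s.2)
  | .C => if Burger.c ∈ s.2 then (s.1, s.2.erase .c) else (.C :: s.1, s.2)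
  | .H => if Burger.h ∈ s.2 then (s.1, s.2.erase .h) else (.H :: s.1, s.2)
  | .F => if s.2 = [] then (.F :: s.1, s.2) else (s.1, s.2.tail)

/-- The reduced word `W̄` of a word `W`: the unfulfilled orders (in order of
appearance) followed by the unconsumed burgers (in order of appearance). -/
def reduce (w : List Burger) : List Burger :=
  let s := w.foldl stepRev ([], [])
  s.1.reverse ++ s.2.reverse

/-- A word is reduced if no burger symbol appears to the left of any order symbol,
i.e. it is a list of orders followed by a list of burgers. -/
def IsReduced (w : List Burger) : Prop :=
  ∃ o b : List Burger, w = o ++ b ∧ (∀ x ∈ o, x.isOrderSym) ∧ (∀ x ∈ b, x.isBurgerSym)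

/-- The word `X(a) X(a+1) ⋯ X(b)`. -/
def word (X : ℤ → Burger) (a b : ℤ) : List Burger :=
  (List.range (b + 1 - a).toNat).map fun i => X (a + i)

/-- The reduced word `X(a,b)`. -/
def rword (X : ℤ → Burger) (a b : ℤ) : List Burger := reduce (word X a b)

/-- `matched X m n` : the burger produced at time `m` is consumed by the order at time `n`;
i.e. `X m ∈ {c,h}` and `n` is the smallest integer `> m` such that the reduced word
`X(m,n)` contains no burger symbol of the same type as `X m`. -/
def matched (X : ℤ → Burger) (m n : ℤ) : Prop :=
  m < n ∧ (X m = .c ∨ X m = .h) ∧ X m ∉ rword X m n ∧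
    ∀ k, m < k → k < n → X m ∈ rword X m k

/-- Push a burger on top of a semi-infinite stack. -/
def push (st : ℕ → Burger) (x : Burger) : ℕ → Burger :=
  fun i => match i with
  | 0 => x
  | i + 1 => st i

/-- Remove the topmost burger of a semi-infinite stack. -/
def pop (st : ℕ → Burger) : ℕ → Burger := fun i => st (i + 1)

/-- Remove the topmost occurrence of the burger `b` from a semi-infinite stack. -/
noncomputable def removeTopmost (st : ℕ → Burger) (b : Burger) : ℕ → Burger :=
  fun i => if i < sInf {j | st j = b} then st i else st (i + 1)

/-- One step of the stack evolution: a burger symbol is pushed on top; an order `C`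
(resp. `H`) removes the topmost `c` (resp. `h`); an order `F` removes the topmost burger. -/
noncomputable def stepStack (st : ℕ → Burger) (x : Burger) : ℕ → Burger :=
  match x with
  | .c => push st .c
  | .h => push st .h
  | .C => removeTopmost st .c
  | .H => removeTopmost st .h
  | .F => pop st

/-- The discrepancy contribution 𝒟(Y(j)) of one step: `+1` for `h` and `C`, `-1` for `c`
and `H`; for `F` it is `+1` or `-1` according to whether the topmost burger removed is a
`c` (so `Y = C`) or an `h` (so `Y = H`). -/
noncomputable def dstep (st : ℕ → Burger) (x : Burger) : ℤ :=
  match x with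
  | .c => -1
  | .h => 1
  | .C => 1
  | .H => -1
  | .F => if st 0 = .c then 1 else -1

/-- The discrepancy `𝒟_N(x) = Σ_{j=1}^N 𝒟(Y(j))` of a finite symbol sequence `x`,
starting from the semi-infinite burger stack `st`. -/
noncomputable def DNstack (st : ℕ → Burger) : List Burger → ℤ
  | [] => 0
  | x :: xs => dstep st x + DNstack (stepStack st x) xs

end Burger

open Burger

/-!
The discrepancy is the change of `#h − #c` in the burger stack. If a stack has one burger more than
another, then after both undergo the same step this is still the case, although the extra burger may
now sit elsewhere and, after an order `F`, be of the other type. So at the end of a word the two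
discrepancies, corrected by the sign of the initial extra burger, differ by the sign of the final
one. Erasing a symbol of a word amounts to adding or removing one burger at that time, with the
discrepancy of that symbol supplying exactly this correction. Hence it changes the discrepancy by at
most `1`, and two words which agree after the same erasure have discrepancies at distance at most
`2`.
-/

namespace Burger

section DeleteAt

variable {α : Type*} (S : ℕ → α) {k m : ℕ}

/-- The semi-infinite sequence obtained from `S` by deleting its entry at position `k` and moving
all later entries up by one. -/
def deleteAt (k : ℕ) : ℕ → α := fun i => if i < k then S i else S (i + 1)

variable {S} in
lemma deleteAt_of_lt {i : ℕ} (hi : i < k) : deleteAt S k i = S i := if_pos hi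

variable {S} in
lemma deleteAt_of_le {i : ℕ} (hi : k ≤ i) : deleteAt S k i = S (i + 1) := if_neg hi.not_gt

lemma deleteAt_succ_deleteAt (hmk : m ≤ k) :
    deleteAt (deleteAt S (k + 1)) m = deleteAt (deleteAt S m) k := by
  funext i
  grind [deleteAt]

lemma frequently_deleteAt (p : α → Prop) (k : ℕ) :
    (∃ᶠ i in atTop, p (deleteAt S k i)) ↔ ∃ᶠ i in atTop, p (S i) := by
  have eventually_shift : ∀ᶠ i in atTop, p (deleteAt S k i) ↔ p (S (i + 1)) := by
    filter_upwards [eventually_ge_atTop k] with i hi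
    rw [deleteAt_of_le hi]
  rw [frequently_congr eventually_shift]
  conv_rhs => rw [← map_add_atTop_eq_nat 1, frequently_map]

variable {S} {a : α}

lemma isLeast_deleteAt_of_lt (hm : IsLeast {j | S j = a} m) (hmk : m < k) :
    IsLeast {j | deleteAt S k j = a} m := by
  refine ⟨(deleteAt_of_lt hmk).trans hm.1, fun j hj => ?_⟩
  by_contra! hjm
  exact hjm.not_ge (hm.2 ((deleteAt_of_lt (hjm.trans hmk)).symm.trans hj))

lemma isLeast_deleteAt_of_le (hm : IsLeast {j | S j = a} (m + 1)) (hkm : k ≤ m) :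
    IsLeast {j | deleteAt S k j = a} m := by
  refine ⟨(deleteAt_of_le hkm).trans hm.1, fun j hj => ?_⟩
  rcases lt_or_ge j k with hjk | hkj
  · exact (Nat.le_succ m).trans (hm.2 ((deleteAt_of_lt hjk).symm.trans hj))
  · exact Nat.succ_le_succ_iff.mp (hm.2 ((deleteAt_of_le hkj).symm.trans hj))

lemma exists_eq_of_exists_deleteAt_eq (ha : ∃ i, deleteAt S k i = a) : ∃ i, S i = a := by
  obtain ⟨i, hi⟩ := ha
  rcases lt_or_ge i k with hik | hki
  · exact ⟨i, (deleteAt_of_lt hik).symm.trans hi⟩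
  · exact ⟨i + 1, (deleteAt_of_le hki).symm.trans hi⟩

end DeleteAt

variable {S : ℕ → Burger}

lemma pop_eq_deleteAt (S : ℕ → Burger) : pop S = deleteAt S 0 := rfl

lemma deleteAt_zero_push (S : ℕ → Burger) (b : Burger) : deleteAt (push S b) 0 = S := rfl

lemma deleteAt_succ_push (S : ℕ → Burger) (b : Burger) (k : ℕ) :
    deleteAt (push S b) (k + 1) = push (deleteAt S k) b := by
  funext i
  cases i <;> simp [deleteAt, push]

lemma removeTopmost_eq_deleteAt {b : Burger} {m : ℕ} (hm : IsLeast {j | S j = b} m) :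
    removeTopmost S b = deleteAt S m := by
  rw [← hm.csInf_eq]
  rfl

lemma exists_removeTopmost_deleteAt {b : Burger} {k : ℕ} (hb : ∃ i, deleteAt S k i = b) :
    ∃ k', removeTopmost (deleteAt S k) b = deleteAt (removeTopmost S b) k' ∧
      removeTopmost S b k' = S k := by
  obtain ⟨m, hm⟩ : ∃ m, IsLeast {j | S j = b} m :=
    ⟨_, isLeast_csInf (exists_eq_of_exists_deleteAt_eq hb)⟩
  rw [removeTopmost_eq_deleteAt hm]
  rcases lt_trichotomy m k with hmk | rfl | hkm
  · obtain ⟨k, rfl⟩ : ∃ k₀, k = k₀ + 1 := ⟨k - 1, by omega⟩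
    rw [removeTopmost_eq_deleteAt (isLeast_deleteAt_of_lt hm hmk)]
    have hmk' : m ≤ k := Nat.lt_succ_iff.mp hmk
    exact ⟨k, deleteAt_succ_deleteAt S hmk', deleteAt_of_le hmk'⟩
  · -- The larger stack loses its extra burger, and the next `b` takes over that role.
    have hm' : IsLeast {j | deleteAt S m j = b} _ := isLeast_csInf hb
    exact ⟨_, removeTopmost_eq_deleteAt hm', hm'.1.trans hm.1.symm⟩
  · obtain ⟨m, rfl⟩ : ∃ m₀, m = m₀ + 1 := ⟨m - 1, by omega⟩
    have hkm' : k ≤ m := Nat.lt_succ_iff.mp hkm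
    rw [removeTopmost_eq_deleteAt (isLeast_deleteAt_of_le hm hkm')]
    exact ⟨k, (deleteAt_succ_deleteAt S hkm').symm, deleteAt_of_lt hkm⟩

/-- A stack is replete if it holds infinitely many burgers of each type, so that every order can be
fulfilled at every time. -/
def Replete (S : ℕ → Burger) : Prop :=
  (∃ᶠ i in atTop, S i = c) ∧ ∃ᶠ i in atTop, S i = h

lemma replete_deleteAt_iff {k : ℕ} : Replete (deleteAt S k) ↔ Replete S :=
  and_congr (frequently_deleteAt S (· = c) k) (frequently_deleteAt S (· = h) k)

/-- The discrepancy `𝒟(b)` of a burger `b`. It is also minus the discrepancy of the order that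
consumes `b`. -/
def burgerSign (b : Burger) : ℤ := if b = c then -1 else 1

lemma abs_burgerSign (b : Burger) : |burgerSign b| = 1 := by
  unfold burgerSign
  split_ifs <;> simp

lemma dstep_F (S : ℕ → Burger) : dstep S F = -burgerSign (S 0) := by
  unfold dstep burgerSign
  split_ifs <;> simp

lemma stepStack_eq_deleteAt_or_eq_deleteAt_stepStack (hS : Replete S) (x : Burger) :
    (∃ k, stepStack S x = deleteAt S k ∧ dstep S x = -burgerSign (S k)) ∨
      ∃ k, S = deleteAt (stepStack S x) k ∧ dstep S x = burgerSign (stepStack S x k) := by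
  have removeTopmost_case {b : Burger} (hb : ∃ᶠ i in atTop, S i = b) :
      ∃ k, removeTopmost S b = deleteAt S k ∧ S k = b :=
    have hm : IsLeast {j | S j = b} _ := isLeast_csInf hb.exists
    ⟨_, removeTopmost_eq_deleteAt hm, hm.1⟩
  cases x with
  | c => exact .inr ⟨0, (deleteAt_zero_push S c).symm, rfl⟩
  | h => exact .inr ⟨0, (deleteAt_zero_push S h).symm, rfl⟩
  | C =>
    obtain ⟨k, hk, hSk⟩ := removeTopmost_case hS.1
    exact .inl ⟨k, hk, by rw [hSk]; rfl⟩
  | H =>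
    obtain ⟨k, hk, hSk⟩ := removeTopmost_case hS.2
    exact .inl ⟨k, hk, by rw [hSk]; rfl⟩
  | F => exact .inl ⟨0, pop_eq_deleteAt S, dstep_F S⟩

lemma Replete.stepStack (hS : Replete S) (x : Burger) : Replete (stepStack S x) := by
  rcases stepStack_eq_deleteAt_or_eq_deleteAt_stepStack hS x with ⟨k, hk, -⟩ | ⟨k, hk, -⟩
  · rw [hk]
    exact replete_deleteAt_iff.mpr hS
  · rw [hk] at hS
    exact replete_deleteAt_iff.mp hS

lemma exists_stepStack_deleteAt (hS : Replete S) (k : ℕ) (x : Burger) :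
    ∃ k', stepStack (deleteAt S k) x = deleteAt (stepStack S x) k' ∧
      burgerSign (S k) + dstep S x - dstep (deleteAt S k) x = burgerSign (stepStack S x k') := by
  have hdel : Replete (deleteAt S k) := replete_deleteAt_iff.mpr hS
  cases x with
  | c => exact ⟨k + 1, (deleteAt_succ_push S c k).symm, add_sub_cancel_right _ _⟩
  | h => exact ⟨k + 1, (deleteAt_succ_push S h k).symm, add_sub_cancel_right _ _⟩
  | C =>
    obtain ⟨k', hstack, hextra⟩ := exists_removeTopmost_deleteAt hdel.1.exists
    exact ⟨k', hstack, (add_sub_cancel_right _ _).trans (congrArg burgerSign hextra.symm)⟩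
  | H =>
    obtain ⟨k', hstack, hextra⟩ := exists_removeTopmost_deleteAt hdel.2.exists
    exact ⟨k', hstack, (add_sub_cancel_right _ _).trans (congrArg burgerSign hextra.symm)⟩
  | F =>
    rw [dstep_F, dstep_F]
    cases k with
    | zero =>
      -- The smaller stack loses the burger below the extra one, which becomes the new extra burger.
      refine ⟨0, rfl, ?_⟩
      rw [add_neg_cancel, zero_sub, neg_neg]
      rfl
    | succ k =>
      refine ⟨k, deleteAt_succ_deleteAt S (Nat.zero_le k), ?_⟩
      rw [deleteAt_of_lt k.succ_pos, add_sub_cancel_right]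
      rfl

lemma abs_burgerSign_add_DNstack_sub_deleteAt_le_one (hS : Replete S) (k : ℕ) (w : List Burger) :
    |burgerSign (S k) + DNstack S w - DNstack (deleteAt S k) w| ≤ 1 := by
  induction w generalizing S k with
  | nil => simp [DNstack, abs_burgerSign]
  | cons x w ih =>
    obtain ⟨k', hstack, hsign⟩ := exists_stepStack_deleteAt hS k x
    calc |burgerSign (S k) + DNstack S (x :: w) - DNstack (deleteAt S k) (x :: w)|
        = |burgerSign (stepStack S x k') + DNstack (stepStack S x) w
            - DNstack (deleteAt (stepStack S x) k') w| := by
          rw [DNstack, DNstack, hstack, ← hsign]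
          ring_nf
      _ ≤ 1 := ih (hS.stepStack x) k'

lemma abs_DNstack_cons_sub_DNstack_le_one (hS : Replete S) (x : Burger) (w : List Burger) :
    |DNstack S (x :: w) - DNstack S w| ≤ 1 := by
  rw [DNstack]
  rcases stepStack_eq_deleteAt_or_eq_deleteAt_stepStack hS x with
    ⟨k, hstack, hsign⟩ | ⟨k, hstack, hsign⟩
  · rw [hstack, hsign, abs_sub_comm]
    convert abs_burgerSign_add_DNstack_sub_deleteAt_le_one hS k w using 2
    ring
  · have key := abs_burgerSign_add_DNstack_sub_deleteAt_le_one (hS.stepStack x) k w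
    rwa [← hstack, ← hsign] at key

lemma abs_DNstack_sub_eraseIdx_le_one (hS : Replete S) (w : List Burger) (i : ℕ) :
    |DNstack S w - DNstack S (w.eraseIdx i)| ≤ 1 := by
  induction w generalizing S i with
  | nil => simp
  | cons x w ih =>
    cases i with
    | zero => exact abs_DNstack_cons_sub_DNstack_le_one hS x w
    | succ i =>
      rw [List.eraseIdx_cons_succ, DNstack, DNstack, add_sub_add_left_eq_sub]
      exact ih (hS.stepStack x) i

lemma eraseIdx_ofFn_eq_of_forall_ne {α : Type*} {n : ℕ} {x y : Fin n → α} {i : Fin n}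
    (hxy : ∀ j, j ≠ i → x j = y j) :
    (List.ofFn x).eraseIdx i = (List.ofFn y).eraseIdx i := by
  refine List.ext_getElem (by simp [List.length_eraseIdx]) fun j _ _ => ?_
  simp only [List.getElem_eraseIdx, List.getElem_ofFn]
  split_ifs with hji
  · exact hxy _ (Fin.ne_of_val_ne hji.ne)
  · exact hxy _ (Fin.ne_of_val_ne (by simp only; omega))

end Burger

/-- Changing a single symbol of the input sequence changes the final discrepancy by at
most `2`: if `x` and `y` agree in all coordinates except exactly one, then
`|𝒟_N(x) − 𝒟_N(y)| ≤ 2`. -/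
theorem discrepancy_change_le_two
    (S0 : ℕ → Burger) (hS0 : ∀ i, S0 i = Burger.c ∨ S0 i = Burger.h)
    (hSc : ∀ n : ℕ, ∃ m : ℕ, n ≤ m ∧ S0 m = Burger.c)
    (hSh : ∀ n : ℕ, ∃ m : ℕ, n ≤ m ∧ S0 m = Burger.h)
    (N : ℕ) (hN : 0 < N) (x y : Fin N → Burger)
    (hdiff : ∃ i : Fin N, x i ≠ y i ∧ ∀ j : Fin N, j ≠ i → x j = y j) :
    |DNstack S0 (List.ofFn x) - DNstack S0 (List.ofFn y)| ≤ 2 := by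
  obtain ⟨i, -, hxy⟩ := hdiff
  have hS : Replete S0 := ⟨frequently_atTop.mpr hSc, frequently_atTop.mpr hSh⟩
  have hx := abs_DNstack_sub_eraseIdx_le_one hS (List.ofFn x) i
  have hy := abs_DNstack_sub_eraseIdx_le_one hS (List.ofFn y) i
  rw [← eraseIdx_ofFn_eq_of_forall_ne hxy, abs_sub_comm] at hy
  exact (abs_sub_le _ _ _).trans (add_le_add hx hy)
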